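/- Let n ≥ 2 and let f(z) = Σ_{i=0}^n a_i z^i be a univariate polynomial of degree at most n with real coefficients satisfying a_i ≥ 0 for all i. If f(z) ≠ 0 for every complex number z with Re(z) > 0 (i.e., f is Hurwitz-stable), then a_n·a_0 ≤ max{ a_1·a_{n−1}, a_2·a_{n−2} }. -/

import Mathlib

/-!
A nonconstant Hurwitz-stable real polynomial has a root `w` in the closed left half-plane, hence a
monic factor with nonnegative coefficients: `X - w` if `w` is real, and `X² - 2 Re(w) X + |w|²`
otherwise. Splitting off such factors shows that, up to sign, all coefficients of a stable
polynomial are nonnegative. In a product `P Q` of polynomials of degrees `d` and `e` with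
nonnegative coefficients, the extreme coefficients are `P_d Q_e` and `P_0 Q_0`, while those of index
`d` and `e` are at least `P_d Q_0` and `P_0 Q_e`. Taking for `P` the factor above, `d ∈ {1, 2}`.
-/

open Polynomial

section NonnegCoeffs

variable {R : Type*}

/-- The polynomials all of whose coefficients are nonnegative. They form a subsemiring, so a product
of factors with nonnegative coefficients again has nonnegative coefficients. -/
def nonnegCoeffs (R : Type*) [Semiring R] [PartialOrder R] [IsOrderedRing R] :
    Subsemiring R[X] where
  carrier := {P | ∀ i, 0 ≤ P.coeff i}
  mul_mem' hP hQ i := by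
    rw [coeff_mul]
    exact Finset.sum_nonneg fun _ _ => mul_nonneg (hP _) (hQ _)
  one_mem' i := by
    rw [coeff_one]
    split_ifs <;> simp
  add_mem' hP hQ i := by
    rw [coeff_add]
    exact add_nonneg (hP i) (hQ i)
  zero_mem' _ := (coeff_zero _).ge

section Semiring

variable [Semiring R] [PartialOrder R] [IsOrderedRing R]

lemma X_mem_nonnegCoeffs : (X : R[X]) ∈ nonnegCoeffs R := fun i => by
  rw [coeff_X]
  split_ifs <;> simp

lemma C_mem_nonnegCoeffs {r : R} (hr : 0 ≤ r) : C r ∈ nonnegCoeffs R := fun i => by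
  rw [coeff_C]
  split_ifs <;> simp [hr]

lemma coeff_mul_coeff_le_coeff_mul_add {P Q : R[X]} (hP : P ∈ nonnegCoeffs R)
    (hQ : Q ∈ nonnegCoeffs R) (i j : ℕ) :
    P.coeff i * Q.coeff j ≤ (P * Q).coeff (i + j) := by
  rw [coeff_mul]
  exact Finset.single_le_sum (f := fun x : ℕ × ℕ => P.coeff x.1 * Q.coeff x.2)
    (fun x _ => mul_nonneg (hP x.1) (hQ x.2))
    (show (i, j) ∈ Finset.HasAntidiagonal.antidiagonal (i + j) from
      Finset.HasAntidiagonal.mem_antidiagonal.mpr rfl)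

end Semiring

lemma coeff_add_mul_coeff_zero_le [CommSemiring R] [PartialOrder R] [IsOrderedRing R]
    {P Q : R[X]} (hP : P ∈ nonnegCoeffs R) (hQ : Q ∈ nonnegCoeffs R) {d e : ℕ}
    (hd : P.natDegree ≤ d) (he : Q.natDegree ≤ e) :
    (P * Q).coeff (d + e) * (P * Q).coeff 0 ≤ (P * Q).coeff d * (P * Q).coeff e :=
  calc (P * Q).coeff (d + e) * (P * Q).coeff 0
      = (P.coeff d * Q.coeff 0) * (P.coeff 0 * Q.coeff e) := by
        rw [coeff_mul_add_eq_of_natDegree_le hd he, mul_coeff_zero]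
        ring
    _ ≤ (P * Q).coeff d * (P * Q).coeff e :=
        mul_le_mul (coeff_mul_coeff_le_coeff_mul_add hP hQ d 0)
          (by simpa only [zero_add] using coeff_mul_coeff_le_coeff_mul_add hP hQ 0 e)
          (mul_nonneg (hP 0) (hQ e)) (mul_mem hP hQ d)

end NonnegCoeffs

/-- Hurwitz stability: the polynomial has no zero in the open right half-plane. The zero polynomial
is not stable. -/
def HurwitzStable {R : Type*} [CommSemiring R] [Algebra R ℂ] (f : R[X]) : Prop :=
  ∀ z : ℂ, 0 < z.re → aeval z f ≠ 0

namespace HurwitzStable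

lemma of_dvd {R : Type*} [CommSemiring R] [Algebra R ℂ] {f g : R[X]} (hf : HurwitzStable f)
    (hgf : g ∣ f) : HurwitzStable g :=
  fun z hz hg => hf z hz (aeval_eq_zero_of_dvd_aeval_eq_zero hgf hg)

lemma ne_zero {R : Type*} [CommSemiring R] [Algebra R ℂ] {f : R[X]} (hf : HurwitzStable f) :
    f ≠ 0 := by
  rintro rfl
  exact hf 1 (by simp) (map_zero _)

lemma exists_monic_dvd_mem_nonnegCoeffs {f : ℝ[X]} (hf : HurwitzStable f)
    (hdeg : f.natDegree ≠ 0) :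
    ∃ Q ∈ nonnegCoeffs ℝ, Q.Monic ∧ (Q.natDegree = 1 ∨ Q.natDegree = 2) ∧ Q ∣ f := by
  obtain ⟨w, hw⟩ : ∃ w : ℂ, aeval w f = 0 :=
    IsAlgClosed.exists_aeval_eq_zero ℂ f (mt natDegree_eq_of_degree_eq_some hdeg)
  have hre : w.re ≤ 0 := not_lt.mp fun h => hf w h hw
  by_cases him : w.im = 0
  · have hroot : f.IsRoot w.re := by
      rw [show w = algebraMap ℝ ℂ w.re from Complex.ext rfl him] at hw
      rwa [aeval_algebraMap_eq_zero_iff] at hw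
    refine ⟨X - C w.re, ?_, monic_X_sub_C _, .inl (natDegree_X_sub_C _), dvd_iff_isRoot.mpr hroot⟩
    rw [sub_eq_add_neg, ← C_neg]
    exact add_mem X_mem_nonnegCoeffs (C_mem_nonnegCoeffs (neg_nonneg.mpr hre))
  · refine ⟨X ^ 2 - C (2 * w.re) * X + C (‖w‖ ^ 2), ?_, by monicity!,
      .inr (by compute_degree!), quadratic_dvd_of_aeval_eq_zero_im_ne_zero f hw him⟩
    rw [sub_eq_add_neg, ← neg_mul, ← C_neg]
    exact add_mem (add_mem (pow_mem X_mem_nonnegCoeffs 2)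
      (mul_mem (C_mem_nonnegCoeffs (by linarith)) X_mem_nonnegCoeffs))
      (C_mem_nonnegCoeffs (sq_nonneg _))

lemma mem_nonnegCoeffs {f : ℝ[X]} (hf : HurwitzStable f) (hlead : 0 ≤ f.leadingCoeff) :
    f ∈ nonnegCoeffs ℝ := by
  induction hN : f.natDegree using Nat.strong_induction_on generalizing f with
  | _ N ih =>
    by_cases hdeg : f.natDegree = 0
    · rw [eq_C_of_natDegree_eq_zero hdeg] at hlead ⊢
      exact C_mem_nonnegCoeffs (by rwa [leadingCoeff_C] at hlead)
    · obtain ⟨Q, hQ, hQmonic, hQdeg, g, rfl⟩ := hf.exists_monic_dvd_mem_nonnegCoeffs hdeg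
      have hg : HurwitzStable g := hf.of_dvd (dvd_mul_left g Q)
      have hgdeg : g.natDegree < N := by
        rw [hQmonic.natDegree_mul' hg.ne_zero] at hN
        omega
      rw [leadingCoeff_monic_mul hQmonic] at hlead
      exact mul_mem hQ (ih _ hgdeg hg hlead rfl)

end HurwitzStable

theorem hurwitz_stable_coeff_inequality_general
    (n : ℕ) (hn : 2 ≤ n) (f : ℝ[X]) (hdeg : f.natDegree ≤ n) (hstable : HurwitzStable f) :
    f.coeff n * f.coeff 0 ≤
      max (f.coeff 1 * f.coeff (n - 1)) (f.coeff 2 * f.coeff (n - 2)) := by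
  wlog hlead : 0 ≤ f.leadingCoeff generalizing f
  · simpa using this (-f) (by simpa using hdeg) (hstable.of_dvd (neg_dvd.mpr dvd_rfl))
      (by rw [leadingCoeff_neg]; linarith)
  by_cases hconst : f.natDegree = 0
  · have hzero : ∀ i, 0 < i → f.coeff i = 0 := fun i hi =>
      coeff_eq_zero_of_natDegree_lt (hconst ▸ hi)
    simp [hzero n (by omega), hzero 1 one_pos]
  obtain ⟨Q, hQ, hQmonic, hQdeg, g, rfl⟩ := hstable.exists_monic_dvd_mem_nonnegCoeffs hconst
  have hg : HurwitzStable g := hstable.of_dvd (dvd_mul_left g Q)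
  rw [leadingCoeff_monic_mul hQmonic] at hlead
  rw [hQmonic.natDegree_mul' hg.ne_zero] at hdeg
  have hle := coeff_add_mul_coeff_zero_le hQ (hg.mem_nonnegCoeffs hlead) le_rfl
    (show g.natDegree ≤ n - Q.natDegree by omega)
  rw [Nat.add_sub_cancel' (show Q.natDegree ≤ n by omega)] at hle
  rcases hQdeg with h | h <;> rw [h] at hle
  exacts [le_max_of_le_left hle, le_max_of_le_right hle]

/-- For a Hurwitz-stable univariate real polynomial `f = Σ_{i=0}^n a_i z^i` of degree at most
`n ≥ 2` with nonnegative coefficients (nonvanishing on the open right half-plane), one has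
`a_n·a_0 ≤ max (a_1·a_{n-1}) (a_2·a_{n-2})`. -/
theorem hurwitz_stable_coeff_inequality
    (n : ℕ) (hn : 2 ≤ n) (f : Polynomial ℝ)
    (hdeg : f.natDegree ≤ n)
    (hcoeff : ∀ i, 0 ≤ f.coeff i)
    (hstable : ∀ z : ℂ, 0 < z.re → Polynomial.aeval z f ≠ 0) :
    f.coeff n * f.coeff 0 ≤
      max (f.coeff 1 * f.coeff (n - 1)) (f.coeff 2 * f.coeff (n - 2)) :=
  hurwitz_stable_coeff_inequality_general n hn f hdeg hstable
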